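/- Let N ≥ 3, let V satisfy condition (V) and the decay condition that there exist A, α > 0 with V⁺(x) ≤ A|x|^{-2-α} for all x ∈ ℝ^N, let f satisfy conditions (f1), (f2), (f3), let λ > 0, and let u be a solution of problem (P_λ). Then u ∈ L²(ℝ^N), i.e. ∫_{ℝ^N} u² dx < ∞. -/

import Mathlib

open MeasureTheory Filter Metric Set
open scoped ENNReal NNReal Topology

noncomputable section

/-- Euclidean space `ℝ^N`. -/
abbrev Euc (N : ℕ) := EuclideanSpace ℝ (Fin N)

/-- The Laplace operator on `ℝ^N`: the sum of the second partial derivatives. -/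
def lap (N : ℕ) (u : Euc N → ℝ) (x : Euc N) : ℝ :=
  ∑ i : Fin N,
    fderiv ℝ (fun y => fderiv ℝ u y (EuclideanSpace.single i 1)) x (EuclideanSpace.single i 1)

/-- The principal eigenvalue `λ₁(R)`: the infimum of `∫_{B_R} |∇u|²` over smooth functions
compactly supported in the open ball `B_R` with `∫_{B_R} V u² = 1`. -/
def lam1 (N : ℕ) (V : Euc N → ℝ) (R : ℝ) : ℝ :=
  sInf { t : ℝ | ∃ u : Euc N → ℝ, ContDiff ℝ (⊤ : ℕ∞) u ∧ HasCompactSupport u ∧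
    tsupport u ⊆ ball (0 : Euc N) R ∧
    (∫ x, V x * u x ^ 2) = 1 ∧ t = ∫ x, ‖gradient u x‖ ^ 2 }

/-- `Λ := lim_{R → ∞} λ₁(R)`. -/
def Lam (N : ℕ) (V : Euc N → ℝ) : ℝ := limUnder atTop (lam1 N V)

/-- Condition (V): `V` is a bounded Hölder-continuous function whose positive part
`V⁺ = max(V, 0)` is nontrivial and decomposes as `V₁ + V₂` with `V₁ ∈ L^{N/2}` and
`|x|² V₂(x) → 0` as `|x| → ∞`. -/
def CondV (N : ℕ) (V V₁ V₂ : Euc N → ℝ) : Prop :=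
  (∃ C β : ℝ≥0, 0 < β ∧ β ≤ 1 ∧ HolderWith C β V) ∧
  (∃ C : ℝ, ∀ x, |V x| ≤ C) ∧
  (∃ x, 0 < V x) ∧
  (∀ x, max (V x) 0 = V₁ x + V₂ x) ∧
  MemLp V₁ ((N : ℝ≥0∞) / 2) volume ∧
  Tendsto (fun x : Euc N => ‖x‖ ^ 2 * V₂ x) (cocompact _) (𝓝 0)

/-- The decay condition: `V⁺(x) ≤ A |x|^{-2-α}`. -/
def CondVDecay (N : ℕ) (V : Euc N → ℝ) : Prop :=
  ∃ A α : ℝ, 0 < A ∧ 0 < α ∧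
    ∀ x : Euc N, x ≠ 0 → max (V x) 0 ≤ A * ‖x‖ ^ (-2 - α)

/-- Conditions (f1), (f2), (f3) on the absorption term `f`. -/
def CondF (N : ℕ) (V : Euc N → ℝ) (f : ℝ → ℝ) : Prop :=
  ContDiff ℝ 1 f ∧ (∀ u : ℝ, 0 ≤ u → 0 ≤ f u) ∧
  -- (f1)
  f 0 = 0 ∧ deriv f 0 = 0 ∧
  0 < Filter.liminf (fun u : ℝ => ((deriv f u / u : ℝ) : EReal)) (𝓝[>] (0 : ℝ)) ∧
  -- (f2)
  StrictMonoOn (fun u : ℝ => f u / u) (Ioi 0) ∧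
  -- (f3)
  (∃ L : EReal, Tendsto (fun u : ℝ => ((f u / u : ℝ) : EReal)) atTop (𝓝 L) ∧
    ((⨆ x, |V x| : ℝ) : EReal) < L)

/-- A solution of problem `(P_λ)`: a positive `C²` function solving the logistic equation
and decaying to zero at infinity. -/
structure IsSolution (N : ℕ) (V : Euc N → ℝ) (f : ℝ → ℝ) (lam : ℝ) (u : Euc N → ℝ) : Prop where
  smooth : ContDiff ℝ 2 u
  pos : ∀ x, 0 < u x
  eqn : ∀ x, -lap N u x = lam * (V x * u x - f (u x))
  decay : Tendsto u (cocompact (Euc N)) (𝓝 0)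

/-- The surface integral `∫_{∂B_R} g dσ` over the sphere of radius `R`, written in polar
coordinates with respect to the canonical surface measure on the unit sphere. -/
def sphereInt (N : ℕ) (g : Euc N → ℝ) (R : ℝ) : ℝ :=
  ∫ ω : sphere (0 : Euc N) 1, g (R • (ω : Euc N)) * R ^ (N - 1)
    ∂((volume : Measure (Euc N)).toSphere)



section helpers

lemma diffAt_of_c2 {N : ℕ} {g : Euc N → ℝ} {x : Euc N} (hg : ContDiffAt ℝ 2 g x) :
    ∀ᶠ y in 𝓝 x, DifferentiableAt ℝ g y :=
  (hg.eventually (by simp)).mono fun y hy => hy.differentiableAt (by norm_num)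

lemma diffAt_fderiv_of_c2 {N : ℕ} {g : Euc N → ℝ} {x : Euc N} (hg : ContDiffAt ℝ 2 g x)
    (e : Euc N) : DifferentiableAt ℝ (fun y => fderiv ℝ g y e) x := by
  have h : ContDiffAt ℝ 1 (fderiv ℝ g) x := hg.fderiv_right (by norm_num)
  exact (h.differentiableAt (by norm_num)).clm_apply (differentiableAt_const e)

lemma lap_congr {N : ℕ} {g h : Euc N → ℝ} {x : Euc N} (hgh : g =ᶠ[𝓝 x] h) :
    lap N g x = lap N h x := by
  unfold lap
  refine Finset.sum_congr rfl fun i _ => ?_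
  have : (fun y => fderiv ℝ g y (EuclideanSpace.single i 1)) =ᶠ[𝓝 x]
      (fun y => fderiv ℝ h y (EuclideanSpace.single i 1)) := by
    filter_upwards [hgh.eventuallyEq_nhds] with y hy
    rw [hy.fderiv_eq]
  rw [this.fderiv_eq]

lemma lap_const {N : ℕ} (c : ℝ) (x : Euc N) : lap N (fun _ => c) x = 0 := by
  simp [lap]

lemma lap_add {N : ℕ} {g h : Euc N → ℝ} {x : Euc N} (hg : ContDiffAt ℝ 2 g x)
    (hh : ContDiffAt ℝ 2 h x) :
    lap N (fun y => g y + h y) x = lap N g x + lap N h x := by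
  unfold lap
  rw [← Finset.sum_add_distrib]
  refine Finset.sum_congr rfl fun i _ => ?_
  have : (fun y => fderiv ℝ (fun y => g y + h y) y (EuclideanSpace.single i 1)) =ᶠ[𝓝 x]
      (fun y => fderiv ℝ g y (EuclideanSpace.single i 1)
        + fderiv ℝ h y (EuclideanSpace.single i 1)) := by
    filter_upwards [diffAt_of_c2 hg, diffAt_of_c2 hh] with y h1 h2
    rw [fderiv_fun_add h1 h2]; rfl
  rw [this.fderiv_eq, fderiv_fun_add (diffAt_fderiv_of_c2 hg _) (diffAt_fderiv_of_c2 hh _)]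
  rfl

lemma lap_const_mul {N : ℕ} {g : Euc N → ℝ} {x : Euc N} (hg : ContDiffAt ℝ 2 g x) (c : ℝ) :
    lap N (fun y => c * g y) x = c * lap N g x := by
  unfold lap
  rw [Finset.mul_sum]
  refine Finset.sum_congr rfl fun i _ => ?_
  have : (fun y => fderiv ℝ (fun y => c * g y) y (EuclideanSpace.single i 1)) =ᶠ[𝓝 x]
      (fun y => c * fderiv ℝ g y (EuclideanSpace.single i 1)) := by
    filter_upwards [diffAt_of_c2 hg] with y h1
    rw [fderiv_const_mul h1]; rfl
  rw [this.fderiv_eq, fderiv_const_mul (diffAt_fderiv_of_c2 hg _)]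
  rfl

lemma second_deriv_nonpos {h : ℝ → ℝ} {t : ℝ} (hm : IsLocalMax h t) (hc : ContinuousAt h t) :
    deriv (deriv h) t ≤ 0 := by
  by_contra! hpos
  have hmin := isLocalMin_of_deriv_deriv_pos hpos hm.deriv_eq_zero hc
  have heq : h =ᶠ[𝓝 t] fun _ => h t := by
    filter_upwards [hm, hmin] with y h1 h2 using le_antisymm h1 h2
  have : deriv (deriv h) t = 0 := by
    have h2 : deriv h =ᶠ[𝓝 t] fun _ => 0 := by
      filter_upwards [heq.eventuallyEq_nhds] with y hy
      rw [hy.deriv_eq]; simp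
    rw [h2.deriv_eq]; simp
  linarith

lemma lap_nonpos_of_isLocalMax {N : ℕ} {g : Euc N → ℝ} {x : Euc N} (hg : ContDiffAt ℝ 2 g x)
    (hm : IsLocalMax g x) : lap N g x ≤ 0 := by
  unfold lap
  refine Finset.sum_nonpos fun i _ => ?_
  set e : Euc N := EuclideanSpace.single i 1
  let l : ℝ → Euc N := fun t => x + t • e
  have hl : ∀ t, HasDerivAt l e t := by
    intro t
    simpa [l] using ((hasDerivAt_id t).smul_const e).const_add x
  have hl0 : l 0 = x := by simp [l]
  have hlc : Tendsto l (𝓝 0) (𝓝 x) := by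
    have := (hl 0).continuousAt.tendsto
    rwa [hl0] at this
  have hmax : IsLocalMax (g ∘ l) 0 := by
    have : ∀ᶠ t in 𝓝 (0:ℝ), g (l t) ≤ g x := hlc.eventually hm
    filter_upwards [this] with t ht
    simpa [hl0] using ht
  have hd : deriv (g ∘ l) =ᶠ[𝓝 0] fun t => fderiv ℝ g (l t) e := by
    filter_upwards [hlc.eventually (diffAt_of_c2 hg)] with t ht
    exact (ht.hasFDerivAt.comp_hasDerivAt t (hl t)).deriv
  have hdd : deriv (deriv (g ∘ l)) 0 = fderiv ℝ (fun y => fderiv ℝ g y e) x e := by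
    rw [hd.deriv_eq]
    have h1 := (diffAt_fderiv_of_c2 hg e).hasFDerivAt
    rw [← hl0] at h1
    have := (h1.comp_hasDerivAt 0 (hl 0)).deriv
    rw [hl0] at this
    exact this
  have hc : ContinuousAt (g ∘ l) 0 := by
    refine ContinuousAt.comp ?_ (hl 0).continuousAt
    rw [hl0]; exact hg.continuousAt
  rw [← hdd]
  exact second_deriv_nonpos hmax hc

/-- powers of the squared norm -/
def Pw (N : ℕ) (p : ℝ) (y : Euc N) : ℝ := (‖y‖ ^ 2) ^ p

lemma Pw_contDiffAt {N : ℕ} (p : ℝ) {x : Euc N} (hx : x ≠ 0) : ContDiffAt ℝ 2 (Pw N p) x := by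
  unfold Pw
  have h : ContDiffAt ℝ 2 (fun y : Euc N => ‖y‖ ^ 2) x := (contDiff_norm_sq ℝ).contDiffAt
  exact h.rpow_const_of_ne (by positivity)

lemma Pw_hasFDerivAt {N : ℕ} (p : ℝ) {x : Euc N} (hx : x ≠ 0) :
    HasFDerivAt (Pw N p) ((2 * p * Pw N (p - 1) x) • innerSL ℝ x) x := by
  unfold Pw
  have h := (hasStrictFDerivAt_norm_sq x).hasFDerivAt
  have h2 := h.rpow_const (p := p) (Or.inl (by positivity))
  refine h2.congr_fderiv ?_
  ext y
  simp
  ring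

lemma lap_Pw {N : ℕ} (p : ℝ) {x : Euc N} (hx : x ≠ 0) :
    lap N (Pw N p) x = 2 * p * (2 * p - 2 + N) * Pw N (p - 1) x := by
  unfold lap
  have hq : 0 < ‖x‖ ^ 2 := by positivity
  have key : ∀ i : Fin N, fderiv ℝ (fun y => fderiv ℝ (Pw N p) y (EuclideanSpace.single i 1)) x
      (EuclideanSpace.single i 1)
      = 2 * p * (2 * (p - 1) * Pw N (p - 1 - 1) x * (x i) ^ 2 + Pw N (p - 1) x) := by
    intro i
    have : (fun y => fderiv ℝ (Pw N p) y (EuclideanSpace.single i 1)) =ᶠ[𝓝 x]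
        (fun y => 2 * p * (Pw N (p - 1) y * y i)) := by
      filter_upwards [isOpen_ne.mem_nhds hx] with y hy
      rw [(Pw_hasFDerivAt p hy).fderiv]
      simp [EuclideanSpace.inner_single_right]
      ring
    rw [this.fderiv_eq]
    have hi : HasFDerivAt (fun y : Euc N => y i) (EuclideanSpace.proj (𝕜 := ℝ) i) x :=
      (EuclideanSpace.proj (𝕜 := ℝ) i : Euc N →L[ℝ] ℝ).hasFDerivAt
    have := ((Pw_hasFDerivAt (p - 1) hx).fun_mul hi).const_mul (2 * p)
    rw [HasFDerivAt.fderiv this]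
    simp [EuclideanSpace.inner_single_right]
    ring
  rw [Finset.sum_congr rfl fun i _ => key i, ← Finset.mul_sum, Finset.sum_add_distrib,
    ← Finset.mul_sum]
  have hs : ∑ i, x i ^ 2 = ‖x‖ ^ 2 := by
    rw [EuclideanSpace.norm_sq_eq]; simp
  have hP : Pw N (p - 1 - 1) x * ‖x‖ ^ 2 = Pw N (p - 1) x := by
    unfold Pw
    rw [Real.rpow_sub_one hq.ne' (p - 1)]; field_simp
  rw [hs]
  simp only [Finset.sum_const, Finset.card_univ, Fintype.card_fin, nsmul_eq_mul]
  rw [mul_assoc (2 * (p - 1)), hP]; ring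

/-- comparison principle -/
lemma comparison {N : ℕ} {u s k : Euc N → ℝ} {R ε : ℝ} (hR : 0 < R) (hε : 0 < ε)
    (hu : ContDiff ℝ 2 u)
    (hdecay : Tendsto u (cocompact (Euc N)) (𝓝 0))
    (hs : ∀ x, x ≠ 0 → ContDiffAt ℝ 2 s x)
    (hsε : ∀ x, R ≤ ‖x‖ → ε ≤ s x)
    (hls : ∀ x, R ≤ ‖x‖ → lap N s x < - (k x * s x))
    (hlu : ∀ x, R ≤ ‖x‖ → - (k x * u x) ≤ lap N u x)
    (hbd : ∀ x, ‖x‖ = R → u x ≤ s x) :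
    ∀ x, R ≤ ‖x‖ → u x ≤ s x := by
  intro x1 hx1
  by_contra! hlt
  have hne : ∀ x : Euc N, R ≤ ‖x‖ → x ≠ 0 := by
    rintro x hx rfl; simp at hx; linarith
  have hspos : ∀ x, R ≤ ‖x‖ → 0 < s x := fun x hx => hε.trans_le (hsε x hx)
  set S : Set (Euc N) := {x | R ≤ ‖x‖}
  have hS : IsClosed S := isClosed_le continuous_const continuous_norm
  have hcont : ContinuousOn (fun x => u x / s x) S := by
    intro x hx
    exact (hu.continuous.continuousAt.div (hs x (hne x hx)).continuousAt
      (hspos x hx).ne').continuousWithinAt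
  have hev : ∀ᶠ x in cocompact (Euc N) ⊓ 𝓟 S, u x / s x ≤ u x1 / s x1 := by
    rw [eventually_inf_principal]
    have : ∀ᶠ x in cocompact (Euc N), u x < ε := hdecay.eventually (gt_mem_nhds hε)
    filter_upwards [this] with x hx hxS
    have h1 : u x / s x ≤ 1 := (div_le_one (hspos x hxS)).2 (hx.le.trans (hsε x hxS))
    have h2 : 1 ≤ u x1 / s x1 := (one_le_div (hspos x1 hx1)).2 hlt.le
    linarith
  obtain ⟨x0, hx0, hmax⟩ := hcont.exists_isMaxOn' hS (x₀ := x1) hx1 hev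
  set M := u x0 / s x0 with hM
  have hM1 : 1 < M := lt_of_lt_of_le ((one_lt_div (hspos x1 hx1)).2 hlt) (hmax hx1)
  have hMs : u x0 = M * s x0 := by rw [hM, div_mul_cancel₀ _ (hspos x0 hx0).ne']
  have hx0R : R < ‖x0‖ := by
    refine lt_of_le_of_ne hx0 fun h => ?_
    have := hbd x0 h.symm
    have h3 := hspos x0 hx0
    nlinarith
  have hloc : IsLocalMax (fun y => u y + (-M) * s y) x0 := by
    have hopen : IsOpen {x : Euc N | R < ‖x‖} := isOpen_lt continuous_const continuous_norm
    filter_upwards [hopen.mem_nhds hx0R] with y hy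
    have hyS : R ≤ ‖y‖ := le_of_lt hy
    have h1 : u y / s y ≤ M := hmax hyS
    rw [div_le_iff₀ (hspos y hyS)] at h1
    rw [hMs]; linarith
  have hs0 := hs x0 (hne x0 hx0)
  have hsm : ContDiffAt ℝ 2 (fun y => (-M) * s y) x0 := contDiffAt_const.mul hs0
  have h1 := lap_nonpos_of_isLocalMax (hu.contDiffAt.add hsm) hloc
  rw [lap_add hu.contDiffAt hsm, lap_const_mul hs0] at h1
  have h2 := hls x0 hx0
  have h3 := hlu x0 hx0
  rw [hMs] at h3
  nlinarith

lemma fderiv_c1 {N : ℕ} {u : Euc N → ℝ} (hu : ContDiff ℝ 2 u) (e : Euc N) :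
    ContDiff ℝ 1 (fun y => fderiv ℝ u y e) :=
  (hu.fderiv_right (m := 1) (by norm_num)).clm_apply contDiff_const

lemma lap_continuous {N : ℕ} {u : Euc N → ℝ} (hu : ContDiff ℝ 2 u) : Continuous (lap N u) := by
  unfold lap
  refine continuous_finsetSum _ fun i _ => ?_
  exact ((fderiv_c1 hu _).continuous_fderiv (by norm_num)).clm_apply continuous_const

lemma integral_by_parts_one {N : ℕ} {f g : Euc N → ℝ} (hf : ContDiff ℝ 1 f) (hg : ContDiff ℝ 1 g)
    (hfc : HasCompactSupport f ∨ HasCompactSupport g) (e : Euc N) :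
    ∫ x, f x * fderiv ℝ g x e = - ∫ x, fderiv ℝ f x e * g x := by
  have cf' : Continuous fun x => fderiv ℝ f x e :=
    (hf.continuous_fderiv (by norm_num)).clm_apply continuous_const
  have cg' : Continuous fun x => fderiv ℝ g x e :=
    (hg.continuous_fderiv (by norm_num)).clm_apply continuous_const
  have dd : ∀ {h : Euc N → ℝ}, HasCompactSupport h → HasCompactSupport (fun x => fderiv ℝ h x e) := by
    intro h hh
    exact HasCompactSupport.fderiv_apply (𝕜 := ℝ) hh e
  refine integral_mul_fderiv_eq_neg_fderiv_mul_of_integrable ?_ ?_ ?_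
    (fun x _ => hf.differentiable (by norm_num) x) (fun x _ => hg.differentiable (by norm_num) x)
  · refine (cf'.mul hg.continuous).integrable_of_hasCompactSupport ?_
    rcases hfc with h | h
    · exact (dd h).mul_right
    · exact h.mul_left
  · refine (hf.continuous.mul cg').integrable_of_hasCompactSupport ?_
    rcases hfc with h | h
    · exact h.mul_right
    · exact (dd h).mul_left
  · refine (hf.continuous.mul hg.continuous).integrable_of_hasCompactSupport ?_
    rcases hfc with h | h
    · exact h.mul_right
    · exact h.mul_left

lemma integral_lap {N : ℕ} {φ u : Euc N → ℝ} (hφ : ContDiff ℝ 2 φ) (hu : ContDiff ℝ 2 u)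
    (hc : HasCompactSupport φ) : ∫ x, φ x * lap N u x = ∫ x, lap N φ x * u x := by
  have hcd : ∀ e, HasCompactSupport (fun x => fderiv ℝ φ x e) := fun e =>
    HasCompactSupport.fderiv_apply (𝕜 := ℝ) hc e
  have c2 : ∀ {h : Euc N → ℝ}, ContDiff ℝ 2 h → ∀ e, Continuous
      fun x => fderiv ℝ (fun y => fderiv ℝ h y e) x e := fun hh e =>
    ((fderiv_c1 hh e).continuous_fderiv (by norm_num)).clm_apply continuous_const
  unfold lap
  simp_rw [Finset.mul_sum, Finset.sum_mul]
  rw [integral_finsetSum, integral_finsetSum]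
  · refine Finset.sum_congr rfl fun i _ => ?_
    rw [integral_by_parts_one (hφ.of_le (by norm_num)) (fderiv_c1 hu _) (Or.inl hc),
      integral_by_parts_one (fderiv_c1 hφ _) (hu.of_le (by norm_num)) (Or.inl (hcd _)), neg_neg]
  · intro i _
    exact ((c2 hφ _).mul hu.continuous).integrable_of_hasCompactSupport
      (HasCompactSupport.fderiv_apply (𝕜 := ℝ) (hcd _) _).mul_right
  · intro i _
    exact (hφ.continuous.mul (c2 hu _)).integrable_of_hasCompactSupport hc.mul_right

lemma lap_scale {N : ℕ} {g : Euc N → ℝ} (hg : ContDiff ℝ 2 g) (r : ℝ) (x : Euc N) :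
    lap N (fun y => g (r • y)) x = r ^ 2 * lap N g (r • x) := by
  have d1 : ∀ {h : Euc N → ℝ} (_ : ContDiff ℝ 1 h) (y e : Euc N),
      fderiv ℝ (fun y => h (r • y)) y e = r * fderiv ℝ h (r • y) e := by
    intro h hh y e
    have hl : HasFDerivAt (fun y : Euc N => r • y) (r • ContinuousLinearMap.id ℝ (Euc N)) y :=
      (hasFDerivAt_id y).const_smul r
    have := ((hh.differentiable (by norm_num) (r • y)).hasFDerivAt.comp y hl).fderiv
    have h3 : fderiv ℝ (fun y => h (r • y)) y = _ := this
    rw [h3]; simp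
  unfold lap
  rw [Finset.mul_sum]
  refine Finset.sum_congr rfl fun i _ => ?_
  have : (fun y => fderiv ℝ (fun y => g (r • y)) y (EuclideanSpace.single i 1)) =
      fun y => r * (fun y => fderiv ℝ g y (EuclideanSpace.single i 1)) (r • y) := by
    funext y; exact d1 (hg.of_le (by norm_num)) y _
  have hs : ContDiff ℝ 1 (fun y : Euc N =>
      (fun y => fderiv ℝ g y (EuclideanSpace.single i 1)) (r • y)) :=
    (fderiv_c1 hg _).comp (contDiff_const_smul _)
  rw [this, fderiv_const_mul (hs.differentiable (by norm_num) x)]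
  have h4 := d1 (fderiv_c1 hg (EuclideanSpace.single i 1)) x (EuclideanSpace.single i 1)
  change r * (fderiv ℝ (fun y => (fderiv ℝ g (r • y)) (EuclideanSpace.single i 1)) x)
    (EuclideanSpace.single i 1) = _
  rw [h4]; ring

/-- cutoffs -/
lemma exists_cutoff (N : ℕ) : ∃ B : ℝ, 0 ≤ B ∧ ∀ R : ℝ, 0 < R → ∃ φ : Euc N → ℝ,
    ContDiff ℝ 2 φ ∧ HasCompactSupport φ ∧ (∀ x, 0 ≤ φ x) ∧ (∀ x, φ x ≤ 1) ∧
    (∀ x, ‖x‖ ≤ R → φ x = 1) ∧ (∀ x, ‖x‖ < R → lap N φ x = 0) ∧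
    (∀ x, 2 * R < ‖x‖ → lap N φ x = 0) ∧ ∀ x, |lap N φ x| ≤ B * (R⁻¹) ^ 2 := by
  let b : ContDiffBump (0 : Euc N) := ⟨1, 2, by norm_num, by norm_num⟩
  have hb : ContDiff ℝ 2 b := b.contDiff
  have h1 : ∀ y : Euc N, ‖y‖ < 1 → lap N b y = 0 := by
    intro y hy
    have : (b : Euc N → ℝ) =ᶠ[𝓝 y] fun _ => 1 := by
      filter_upwards [isOpen_ball.mem_nhds (show y ∈ ball (0 : Euc N) 1 by simpa using hy)] with z hz
      exact b.one_of_mem_closedBall (ball_subset_closedBall hz)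
    rw [lap_congr this, lap_const]
  have h2 : ∀ y : Euc N, 2 < ‖y‖ → lap N b y = 0 := by
    intro y hy
    have : (b : Euc N → ℝ) =ᶠ[𝓝 y] fun _ => 0 := by
      filter_upwards [(isOpen_lt continuous_const continuous_norm).mem_nhds hy] with z hz
      refine b.zero_of_le_dist ?_
      simpa using le_of_lt hz
    rw [lap_congr this, lap_const]
  have hcs : HasCompactSupport (lap N b) := by
    refine HasCompactSupport.intro (isCompact_closedBall (0 : Euc N) 2) fun y hy => h2 y ?_
    simpa using hy
  obtain ⟨B, hB⟩ := hcs.exists_bound_of_continuous (lap_continuous hb)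
  refine ⟨B, (norm_nonneg _).trans (hB 0), fun R hR => ⟨fun x => b (R⁻¹ • x), ?_⟩⟩
  have hn : ∀ x : Euc N, ‖R⁻¹ • x‖ = R⁻¹ * ‖x‖ := by
    intro x; rw [norm_smul, Real.norm_of_nonneg (by positivity)]
  refine ⟨hb.comp (contDiff_const_smul _), ?_, fun x => b.nonneg, fun x => b.le_one,
    ?_, ?_, ?_, ?_⟩
  · exact b.hasCompactSupport.comp_smul (by positivity)
  · intro x hx
    refine b.one_of_mem_closedBall ?_
    rw [mem_closedBall_zero_iff, hn]
    rw [inv_mul_le_iff₀ hR]; simpa [b] using hx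
  · intro x hx
    rw [lap_scale hb, h1, mul_zero]
    rw [hn, inv_mul_lt_iff₀ hR]; simpa using hx
  · intro x hx
    rw [lap_scale hb, h2, mul_zero]
    rw [hn, lt_inv_mul_iff₀ hR]; linarith
  · intro x
    rw [lap_scale hb, abs_mul, abs_of_nonneg (by positivity), mul_comm]
    gcongr
    exact hB _

lemma f_lower {N : ℕ} {V : Euc N → ℝ} {f : ℝ → ℝ} (hf : CondF N V f) (M : ℝ) (hM : 0 < M) :
    ∃ c : ℝ, 0 < c ∧ ∀ t, 0 < t → t ≤ M → c * t ^ 2 ≤ f t := by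
  obtain ⟨hfc, -, hf0, -, hlim, hmono, -⟩ := hf
  obtain ⟨c, hc0, hc⟩ := EReal.lt_iff_exists_real_btwn.1 hlim
  have hc0' : 0 < c := by exact_mod_cast hc0
  have hev := eventually_lt_of_lt_liminf hc
  obtain ⟨δ, hδ, hδ2⟩ := mem_nhdsGT_iff_exists_Ioc_subset.1 hev
  have hδ0 : 0 < δ := hδ
  have hder : ∀ t, 0 < t → t ≤ δ → c * t ≤ deriv f t := by
    intro t ht ht2
    have : ((c : ℝ) : EReal) < ((deriv f t / t : ℝ) : EReal) := hδ2 ⟨ht, ht2⟩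
    have h : c < deriv f t / t := by exact_mod_cast this
    exact ((lt_div_iff₀ ht).1 h).le
  have hfd : Differentiable ℝ f := hfc.differentiable (by norm_num)
  have hsmall : ∀ t, 0 < t → t ≤ δ → c / 2 * t ^ 2 ≤ f t := by
    have hm : MonotoneOn (fun t => f t - c / 2 * t ^ 2) (Icc 0 δ) := by
      refine monotoneOn_of_deriv_nonneg (convex_Icc 0 δ) ?_ ?_ ?_
      · exact (hfd.continuous.sub (by fun_prop)).continuousOn
      · exact (hfd.sub (by fun_prop)).differentiableOn
      · intro t ht
        rw [interior_Icc] at ht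
        have h1 : HasDerivAt (fun t : ℝ => c / 2 * t ^ 2) (c * t) t := by
          have := (hasDerivAt_pow 2 t).const_mul (c / 2)
          refine this.congr_deriv ?_
          push_cast; ring
        have h2 := ((hfd t).hasDerivAt.fun_sub h1).deriv
        rw [h2]
        linarith [hder t ht.1 ht.2.le]
    intro t ht ht2
    have := hm (left_mem_Icc.2 hδ0.le) ⟨ht.le, ht2⟩ ht.le
    simp [hf0] at this
    linarith
  have hfδ : 0 < f δ / δ := by
    have := hsmall δ hδ0 le_rfl
    have h2 : 0 < c / 2 * δ ^ 2 := by positivity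
    exact div_pos (by linarith) hδ0
  refine ⟨min (c / 2) (f δ / δ / M), by positivity, fun t ht htM => ?_⟩
  rcases le_total t δ with h | h
  · refine le_trans ?_ (hsmall t ht h)
    gcongr
    exact min_le_left _ _
  · have h1 : f δ / δ ≤ f t / t := hmono.monotoneOn hδ0 ht h
    rw [le_div_iff₀ ht] at h1
    refine le_trans ?_ h1
    calc min (c / 2) (f δ / δ / M) * t ^ 2 ≤ (f δ / δ / M) * t ^ 2 := by
          gcongr; exact min_le_right _ _
      _ = f δ / δ * t * (t / M) := by field_simp
      _ ≤ f δ / δ * t * 1 := by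
          gcongr
          exact (div_le_one hM).2 htM
      _ = _ := by ring

lemma Pw_mul {N : ℕ} {x : Euc N} (hx : x ≠ 0) (p q : ℝ) :
    Pw N p x * Pw N q x = Pw N (p + q) x := by
  unfold Pw
  rw [Real.rpow_add (by positivity)]

lemma Pw_pos {N : ℕ} {x : Euc N} (hx : x ≠ 0) (p : ℝ) : 0 < Pw N p x := by
  unfold Pw; positivity

lemma decay_bound {N : ℕ} (hN : 3 ≤ N) {u : Euc N → ℝ} {K α : ℝ} (hK : 0 < K) (hα : 0 < α)
    (hu : ContDiff ℝ 2 u)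
    (hdecay : Tendsto u (cocompact (Euc N)) (𝓝 0)) {M : ℝ} (hM0 : 0 < M) (hM : ∀ x, u x ≤ M)
    (hlu : ∀ x, x ≠ 0 → - (K * Pw N (-1 - α / 2) x * u x) ≤ lap N u x) :
    ∃ R C : ℝ, 1 < R ∧ 0 < C ∧ ∀ x, R ≤ ‖x‖ → u x ≤ C * Pw N ((2 - N) / 2) x := by
  have hN' : (3 : ℝ) ≤ N := by exact_mod_cast hN
  obtain ⟨δ, hδ0, hδα, hδ1⟩ : ∃ δ : ℝ, 0 < δ ∧ δ < α ∧ δ ≤ 1 / 2 := by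
    refine ⟨min α 1 / 2, by positivity, ?_, ?_⟩
    · have := min_le_left α 1; linarith
    · have := min_le_right α 1; linarith
  set a : ℝ := (2 - N) / 2 with ha
  obtain ⟨q0, hq0⟩ : ∃ q0 : ℝ, ∀ q ≥ q0, q ^ (-((α - δ) / 2)) < δ / (4 * K) := by
    have := (tendsto_rpow_neg_atTop (y := (α - δ) / 2) (by linarith)).eventually
      (gt_mem_nhds (show 0 < δ / (4 * K) by positivity))
    exact eventually_atTop.1 this
  set R := max q0 2 with hR
  have hR2 : 2 ≤ R := le_max_right _ _
  have hne : ∀ x : Euc N, R ≤ ‖x‖ → x ≠ 0 := by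
    rintro x hx rfl; simp at hx; linarith
  have hq1 : ∀ x : Euc N, R ≤ ‖x‖ → 1 < ‖x‖ ^ 2 := fun x hx => by nlinarith
  have hτ : ∀ x : Euc N, R ≤ ‖x‖ → 4 * K * Pw N (-((α - δ) / 2)) x < δ := by
    intro x hx
    have h := hq0 (‖x‖ ^ 2) (by
      have : q0 ≤ R := le_max_left _ _
      nlinarith)
    rw [lt_div_iff₀ (by positivity)] at h
    unfold Pw
    linarith
  set w0 : ℝ := (R ^ 2) ^ a - (R ^ 2) ^ (a - δ / 2) with hw0
  have hw0pos : 0 < w0 := by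
    have := Real.rpow_lt_rpow_of_exponent_lt (x := R ^ 2) (y := a - δ / 2) (z := a)
      (by nlinarith) (by linarith)
    linarith
  have hwpos : ∀ x : Euc N, R ≤ ‖x‖ → Pw N (a - δ / 2) x < Pw N a x := by
    intro x hx
    exact Real.rpow_lt_rpow_of_exponent_lt (hq1 x hx) (by linarith)
  refine ⟨R, M / w0, by linarith, by positivity, fun x hx => ?_⟩
  set C := M / w0 with hC
  have hC0 : 0 < C := by positivity
  have main : ∀ ε : ℝ, 0 < ε → ∀ x, R ≤ ‖x‖ →
      u x ≤ C * (Pw N a x + (-1) * Pw N (a - δ / 2) x) + ε * (1 + Pw N (-(δ / 2)) x) := by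
    intro ε hε
    refine comparison (k := fun x => K * Pw N (-1 - α / 2) x) (R := R) (ε := ε)
      (by linarith) hε hu hdecay ?_ ?_ ?_ (fun x hx => hlu x (hne x hx)) ?_
    · intro x hx
      exact (contDiffAt_const.mul ((Pw_contDiffAt a hx).add
        (contDiffAt_const.mul (Pw_contDiffAt _ hx)))).add
        (contDiffAt_const.mul (contDiffAt_const.add (Pw_contDiffAt _ hx)))
    · intro x hx
      have h1 := hwpos x hx
      have h2 := Pw_pos (hne x hx) (-(δ / 2))
      have h3 : 0 ≤ C * (Pw N a x + (-1) * Pw N (a - δ / 2) x) :=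
        mul_nonneg hC0.le (by linarith)
      nlinarith
    · intro x hx
      have hx0 := hne x hx
      have cb := contDiffAt_const (c := (-1 : ℝ)) |>.mul (Pw_contDiffAt (a - δ / 2) hx0)
      have cab := (Pw_contDiffAt a hx0).add cb
      have cc := contDiffAt_const (c := (1 : ℝ)) |>.add (Pw_contDiffAt (-(δ / 2)) hx0)
      have hlap : lap N (fun x => C * (Pw N a x + (-1) * Pw N (a - δ / 2) x)
          + ε * (1 + Pw N (-(δ / 2)) x)) x
          = C * (-(((N : ℝ) - 2 + δ) * δ * Pw N (a - δ / 2 - 1) x))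
            - ε * (δ * (N - 2 - δ) * Pw N (-(δ / 2) - 1) x) := by
        rw [lap_add (contDiffAt_const.mul cab) (contDiffAt_const.mul cc),
          lap_const_mul cab, lap_const_mul cc, lap_add (Pw_contDiffAt a hx0) cb,
          lap_const_mul (Pw_contDiffAt _ hx0), lap_add contDiffAt_const (Pw_contDiffAt _ hx0),
          lap_const, lap_Pw _ hx0, lap_Pw _ hx0, lap_Pw _ hx0, ha]
        ring
      rw [hlap]
      set τ := Pw N (-((α - δ) / 2)) x with hτdef
      have hτ1 := hτ x hx
      rw [← hτdef] at hτ1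
      have hτ0 : 0 < τ := Pw_pos hx0 _
      have e1 : Pw N (-1 - α / 2) x * Pw N a x = τ * Pw N (a - δ / 2 - 1) x := by
        rw [hτdef, Pw_mul hx0, Pw_mul hx0]; congr 1; ring
      have e2 : Pw N (-1 - α / 2) x = τ * Pw N (-(δ / 2) - 1) x := by
        rw [hτdef, Pw_mul hx0]; congr 1; ring
      have pb1 := Pw_pos hx0 (a - δ / 2 - 1)
      have pc1 := Pw_pos hx0 (-(δ / 2) - 1)
      have pb := Pw_pos hx0 (a - δ / 2)
      have pk := Pw_pos hx0 (-1 - α / 2)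
      have pc : Pw N (-(δ / 2)) x ≤ 1 :=
        Real.rpow_le_one_of_one_le_of_nonpos (hq1 x hx).le (by linarith)
      have hKτ : 0 < K * τ := by positivity
      have hk1 : K * τ ≤ ((N : ℝ) - 2 + δ) * δ := by nlinarith
      have hk2 : 2 * K * τ < δ * ((N : ℝ) - 2 - δ) := by nlinarith
      have i1 : K * Pw N (-1 - α / 2) x * (C * (Pw N a x + (-1) * Pw N (a - δ / 2) x))
          ≤ C * (((N : ℝ) - 2 + δ) * δ * Pw N (a - δ / 2 - 1) x) := by
        calc _ ≤ K * Pw N (-1 - α / 2) x * (C * Pw N a x) := by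
              gcongr; linarith
          _ = C * (K * τ * Pw N (a - δ / 2 - 1) x) := by
              rw [mul_assoc K τ, ← e1]; ring
          _ ≤ _ := mul_le_mul_of_nonneg_left (mul_le_mul_of_nonneg_right hk1 pb1.le) hC0.le
      have i2 : K * Pw N (-1 - α / 2) x * (ε * (1 + Pw N (-(δ / 2)) x))
          < ε * (δ * (N - 2 - δ) * Pw N (-(δ / 2) - 1) x) := by
        calc _ ≤ K * Pw N (-1 - α / 2) x * (ε * (1 + 1)) := by gcongr
          _ = ε * (2 * K * τ * Pw N (-(δ / 2) - 1) x) := by rw [e2]; ring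
          _ < _ := mul_lt_mul_of_pos_left (mul_lt_mul_of_pos_right hk2 pc1) hε
      change _ < -(K * Pw N (-1 - α / 2) x * _)
      linarith [mul_add (K * Pw N (-1 - α / 2) x)
        (C * (Pw N a x + (-1) * Pw N (a - δ / 2) x)) (ε * (1 + Pw N (-(δ / 2)) x))]
    · intro x hx
      have hw : Pw N a x + (-1) * Pw N (a - δ / 2) x = w0 := by
        rw [hw0]; unfold Pw; rw [hx]; ring
      have h2 := Pw_pos (hne x hx.ge) (-(δ / 2))
      have hCw : C * w0 = M := by rw [hC]; field_simp
      rw [hw, hCw]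
      have := hM x
      have : 0 < ε * (1 + Pw N (-(δ / 2)) x) := by positivity
      linarith [hM x]
  have hfin : u x ≤ C * (Pw N a x + (-1) * Pw N (a - δ / 2) x) := by
    refine le_of_forall_pos_le_add fun η hη => ?_
    have hp : 0 < 1 + Pw N (-(δ / 2)) x := by
      have := Pw_pos (hne x hx) (-(δ / 2)); linarith
    have := main (η / (1 + Pw N (-(δ / 2)) x)) (by positivity) x hx
    rwa [div_mul_cancel₀ _ hp.ne'] at this
  refine hfin.trans ?_
  gcongr
  have := Pw_pos (hne x hx) (a - δ / 2)
  linarith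

lemma source_integrable {N : ℕ} {g : Euc N → ℝ} (hg : Continuous g) {D α R : ℝ}
    (hα : 0 < α) (hR : 1 < R) (hD : 0 ≤ D) (hb : ∀ x, R ≤ ‖x‖ → |g x| ≤ D * ‖x‖ ^ (-((N : ℝ) + α))) :
    Integrable g := by
  have hint : Integrable (fun x : Euc N => (1 + ‖x‖) ^ (-((N : ℝ) + α))) :=
    integrable_one_add_norm (by simp [hα])
  refine hg.locallyIntegrable.integrable_of_isBigO_cocompact ?_ (hint.integrableAtFilter _)
  refine Asymptotics.IsBigO.of_bound (D * 2 ^ ((N : ℝ) + α)) ?_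
  have : ∀ᶠ x in cocompact (Euc N), R ≤ ‖x‖ :=
    (tendsto_norm_cocompact_atTop (E := Euc N)).eventually (eventually_ge_atTop R)
  filter_upwards [this] with x hx
  have hx0 : 0 < ‖x‖ := by linarith
  rw [Real.norm_eq_abs, Real.norm_of_nonneg (by positivity), mul_assoc]
  refine (hb x hx).trans ?_
  gcongr
  have h2 : (2 : ℝ) ^ ((N : ℝ) + α) = (1 / 2 : ℝ) ^ (-((N : ℝ) + α)) := by
    rw [Real.rpow_neg (by norm_num), ← Real.inv_rpow (by norm_num)]; norm_num
  rw [h2, ← Real.mul_rpow (by norm_num) (by positivity)]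
  refine Real.rpow_le_rpow_of_nonpos (by positivity) (by linarith) ?_
  have : (0 : ℝ) ≤ N := by positivity
  linarith

lemma Pw_eq {N : ℕ} (p : ℝ) (x : Euc N) : Pw N p x = ‖x‖ ^ (2 * p) := by
  unfold Pw
  rw [Real.rpow_mul (norm_nonneg x)]
  norm_num

end helpers

/-- any solution `u` of `(P_λ)` is square-integrable. -/
theorem stmt10 (N : ℕ) (hN : 3 ≤ N) (V V₁ V₂ : Euc N → ℝ)
    (hV : CondV N V V₁ V₂) (hdec : CondVDecay N V)
    (f : ℝ → ℝ) (hf : CondF N V f)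
    (lam : ℝ) (hlam : 0 < lam)
    (u : Euc N → ℝ) (hu : IsSolution N V f lam u) :
    Integrable (fun x : Euc N => u x ^ 2) := by
  have hVc : Continuous V := by
    obtain ⟨⟨C, β, hβ, -, h⟩, -⟩ := hV
    exact h.continuous hβ
  obtain ⟨A, α, hA, hα, hVd⟩ := hdec
  have hus := hu.smooth
  have huc : Continuous u := hus.continuous
  have hfc : Continuous f := hf.1.continuous
  have hfnn : ∀ t : ℝ, 0 ≤ t → 0 ≤ f t := hf.2.1
  obtain ⟨xm, hxm⟩ : ∃ x, ∀ y, u y ≤ u x :=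
    huc.exists_forall_ge' 0 ((hu.decay.eventually (gt_mem_nhds (hu.pos 0))).mono fun x hx => hx.le)
  have hM0 := hu.pos xm
  obtain ⟨c, hc0, hc⟩ := f_lower hf (u xm) hM0
  have hcu : ∀ x, c * u x ^ 2 ≤ f (u x) := fun x => hc _ (hu.pos x) (hxm x)
  have hlapu : ∀ x, lap N u x = lam * (f (u x) - V x * u x) := fun x => by
    linarith [hu.eqn x]
  set g : Euc N → ℝ := fun x => max (V x) 0 * u x with hg
  have hgc : Continuous g := (hVc.max continuous_const).mul huc
  have hg0 : ∀ x, 0 ≤ g x := fun x => mul_nonneg (le_max_right _ _) (hu.pos x).le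
  have hlapg : ∀ x, lam * f (u x) - lam * g x ≤ lap N u x := by
    intro x
    rw [hlapu]
    have : V x * u x ≤ g x := mul_le_mul_of_nonneg_right (le_max_left _ _) (hu.pos x).le
    nlinarith
  obtain ⟨R0, C, hR0, hC0, hdb⟩ := decay_bound hN (K := lam * A) (by positivity) hα hus hu.decay hM0 hxm
    (by
      intro x hx
      refine le_trans ?_ (hlapg x)
      have h1 : Pw N (-1 - α / 2) x = ‖x‖ ^ (-2 - α) := by
        rw [Pw_eq]; congr 1; ring
      have h2 : g x ≤ A * ‖x‖ ^ (-2 - α) * u x :=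
        mul_le_mul_of_nonneg_right (hVd x hx) (hu.pos x).le
      have h3 := hfnn (u x) (hu.pos x).le
      rw [h1]
      have h4 := mul_le_mul_of_nonneg_left h2 hlam.le
      have h5 : 0 ≤ lam * f (u x) := by positivity
      linarith)
  have hdb' : ∀ x, R0 ≤ ‖x‖ → u x ≤ C * ‖x‖ ^ (2 - (N : ℝ)) := by
    intro x hx
    have := hdb x hx
    rwa [Pw_eq, mul_div_cancel₀ _ (by norm_num)] at this
  have hgi : Integrable g := by
    refine source_integrable hgc (D := A * C) hα hR0 (by positivity) fun x hx => ?_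
    have hx0 : 0 < ‖x‖ := by linarith
    rw [abs_of_nonneg (hg0 x)]
    calc g x ≤ (A * ‖x‖ ^ (-2 - α)) * (C * ‖x‖ ^ (2 - (N : ℝ))) :=
          mul_le_mul (hVd x (norm_pos_iff.1 hx0)) (hdb' x hx) (hu.pos x).le (by positivity)
      _ = A * C * (‖x‖ ^ (-2 - α) * ‖x‖ ^ (2 - (N : ℝ))) := by ring
      _ = _ := by
          rw [← Real.rpow_add hx0]; congr 2; ring
  obtain ⟨B, hB0, hcut⟩ := exists_cutoff N
  set ν : ℝ := (volume : Measure (Euc N)).real (closedBall 0 1) with hν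
  set I : ℝ := (C * B * 2 ^ N * ν + lam * ∫ x, g x) / (lam * c) with hI
  refine (aecover_ball (x := (0 : Euc N)) tendsto_id).integrable_of_integral_bounded_of_nonneg_ae
    (l := atTop) I ?_ (ae_of_all _ fun x => sq_nonneg _) ?_
  · intro r
    exact ((huc.pow 2).continuousOn.integrableOn_compact (isCompact_closedBall 0 r)).mono_set
      ball_subset_closedBall
  filter_upwards [eventually_ge_atTop R0] with R hR
  have hRpos : 0 < R := by linarith
  obtain ⟨φ, hφs, hφc, hφ0, hφ1, hφone, hφin, hφout, hφB⟩ := hcut R hRpos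
  have i1 : Integrable (fun x => φ x * f (u x)) :=
    (hφs.continuous.mul (hfc.comp huc)).integrable_of_hasCompactSupport hφc.mul_right
  have i2 : Integrable (fun x => φ x * lap N u x) :=
    (hφs.continuous.mul (lap_continuous hus)).integrable_of_hasCompactSupport hφc.mul_right
  have s1 : c * ∫ x in ball (0 : Euc N) R, u x ^ 2 ≤ ∫ x, φ x * f (u x) := by
    rw [← integral_const_mul, ← integral_indicator measurableSet_ball]
    refine integral_mono_of_nonneg (ae_of_all _ fun x => ?_) i1 (ae_of_all _ fun x => ?_)
    · exact indicator_nonneg (fun y _ => by positivity) x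
    · by_cases hx : x ∈ ball (0 : Euc N) R
      · simp only [indicator_of_mem hx]
        rw [hφone x (by simpa using (mem_ball_zero_iff.1 hx).le), one_mul]
        exact hcu x
      · simp only [indicator_of_notMem hx]
        exact mul_nonneg (hφ0 x) (hfnn _ (hu.pos x).le)
  have s2 : lam * ∫ x, φ x * f (u x) ≤ (∫ x, φ x * lap N u x) + lam * ∫ x, g x := by
    rw [← integral_const_mul, ← integral_const_mul, ← integral_add i2 (hgi.const_mul _)]
    refine integral_mono (i1.const_mul _) (i2.add (hgi.const_mul _)) fun x => ?_
    have h1 := mul_le_mul_of_nonneg_left (hlapg x) (hφ0 x)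
    have h2 : φ x * (lam * g x) ≤ 1 * (lam * g x) :=
      mul_le_mul_of_nonneg_right (hφ1 x) (mul_nonneg hlam.le (hg0 x))
    change lam * (φ x * f (u x)) ≤ φ x * lap N u x + lam * g x
    linarith
  have s3 : ∫ x, φ x * lap N u x ≤ C * B * 2 ^ N * ν := by
    rw [integral_lap hφs hus hφc]
    have hfin : (volume : Measure (Euc N)) (closedBall 0 (2 * R)) ≠ ⊤ :=
      (isCompact_closedBall _ _).measure_lt_top.ne
    calc ∫ x, lap N φ x * u x
        ≤ ∫ x, (closedBall (0 : Euc N) (2 * R)).indicator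
            (fun _ => B * (R⁻¹) ^ 2 * (C * R ^ (2 - (N : ℝ)))) x := by
          refine integral_mono ?_ ?_ fun x => ?_
          · refine ((lap_continuous hφs).mul huc).integrable_of_hasCompactSupport ?_
            refine HasCompactSupport.mul_right ?_
            refine HasCompactSupport.intro (isCompact_closedBall (0 : Euc N) (2 * R))
              fun y hy => hφout y ?_
            simpa using hy
          · exact (integrable_indicator_iff measurableSet_closedBall).2
              (integrableOn_const hfin)
          · have hpos : 0 ≤ B * (R⁻¹) ^ 2 * (C * R ^ (2 - (N : ℝ))) := by positivity
            by_cases hx : x ∈ closedBall (0 : Euc N) (2 * R)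
            · simp only [indicator_of_mem hx]
              rcases lt_or_ge ‖x‖ R with h | h
              · rw [hφin x h, zero_mul]; exact hpos
              · refine mul_le_mul ((le_abs_self _).trans (hφB x)) ?_ (hu.pos x).le (by positivity)
                refine (hdb' x (hR.trans h)).trans ?_
                gcongr ?_ * ?_
                refine Real.rpow_le_rpow_of_nonpos hRpos h ?_
                have : (3 : ℝ) ≤ N := by exact_mod_cast hN
                linarith
            · simp only [indicator_of_notMem hx]
              rw [hφout x (by simpa using hx), zero_mul]
      _ = C * B * 2 ^ N * ν := by
          rw [integral_indicator measurableSet_closedBall, setIntegral_const,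
            Measure.addHaar_real_closedBall' _ _ (by positivity), smul_eq_mul,
            finrank_euclideanSpace_fin, ← hν, mul_pow, Real.rpow_sub hRpos, Real.rpow_natCast]
          norm_num
          field_simp
  rw [hI, le_div_iff₀ (by positivity)]
  have s4 := mul_le_mul_of_nonneg_left s1 hlam.le
  simp only [id]
  linarith

end
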